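/- Let f be a smooth cubic form in four variables over 𝔽₂ whose stabilizer {g ∈ GL₄(𝔽₂) : f ∘ g = f} contains a subgroup isomorphic to the symmetric group S₆. Then f vanishes at every point of 𝔽₂⁴, and there exists g ∈ GL₄(𝔽₂) with f ∘ g = c₀, where c₀ = x²t + y²z + yz² + xt². -/

import Mathlib

open MvPolynomial

noncomputable section

/-- The field with two elements. -/
abbrev F2 : Type := ZMod 2

/-- An algebraic closure of `F2`. -/
abbrev Kbar : Type := AlgebraicClosure F2

/-- Linear substitution action of a matrix `g` on a polynomial `f`:
`(act g f)(x) = f (g * x)`, i.e. the variable `X i` is replaced by `∑ j, g i j • X j`. -/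
def act (g : Matrix (Fin 4) (Fin 4) F2) (f : MvPolynomial (Fin 4) F2) :
    MvPolynomial (Fin 4) F2 :=
  aeval (fun i => ∑ j, g i j • X j) f

lemma act_one (f : MvPolynomial (Fin 4) F2) : act 1 f = f := by
  have h : (fun i => ∑ j, (1 : Matrix (Fin 4) (Fin 4) F2) i j • (X j : MvPolynomial (Fin 4) F2))
      = X := by
    funext i
    simp [Matrix.one_apply, ite_smul]
  simp [act, h]

lemma act_act (g h : Matrix (Fin 4) (Fin 4) F2) (f : MvPolynomial (Fin 4) F2) :
    act g (act h f) = act (h * g) f := by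
  show (aeval _) ((aeval _) f) = _
  rw [← AlgHom.comp_apply, comp_aeval]
  have key : (fun i => (aeval fun i => ∑ j, g i j • (X j : MvPolynomial (Fin 4) F2))
        (∑ j, h i j • (X j : MvPolynomial (Fin 4) F2)))
      = fun i => ∑ j, (h * g) i j • (X j : MvPolynomial (Fin 4) F2) := by
    funext i
    simp only [map_sum, map_smul, aeval_X, Matrix.mul_apply, Finset.smul_sum, smul_smul,
      Finset.sum_smul]
    rw [Finset.sum_comm]
  rw [key]
  rfl

/-- The stabilizer of a polynomial `f` under the linear-substitution action of `GL₄(𝔽₂)`. -/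
def stab (f : MvPolynomial (Fin 4) F2) : Subgroup (GL (Fin 4) F2) where
  carrier := {g | act (g : Matrix (Fin 4) (Fin 4) F2) f = f}
  one_mem' := by simpa using act_one f
  mul_mem' := by
    intro a b ha hb
    simp only [Set.mem_setOf_eq] at *
    have : act ((↑(a * b) : Matrix (Fin 4) (Fin 4) F2)) f = act ↑b (act ↑a f) := by
      rw [act_act]; rfl
    rw [this, ha, hb]
  inv_mem' := by
    intro a ha
    simp only [Set.mem_setOf_eq] at *
    have h2 := congrArg (act ((↑(a⁻¹) : Matrix (Fin 4) (Fin 4) F2))) ha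
    rw [act_act] at h2
    rw [Units.mul_inv, act_one] at h2
    exact h2.symm

/-- A smooth cubic form over `𝔽₂`: homogeneous of degree `3`, such that over an algebraic
closure the only common zero of `f` and its four partial derivatives is the origin. -/
def IsSmoothCubic (f : MvPolynomial (Fin 4) F2) : Prop :=
  f.IsHomogeneous 3 ∧
    ∀ v : Fin 4 → Kbar,
      eval v (map (algebraMap F2 Kbar) f) = 0 →
      (∀ i : Fin 4, eval v (map (algebraMap F2 Kbar) (pderiv i f)) = 0) →
      v = 0

/-- The cubic form `x²t + y²z + yz² + xt²`. -/
def c0 : MvPolynomial (Fin 4) F2 :=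
  X 0 ^ 2 * X 3 + X 1 ^ 2 * X 2 + X 1 * X 2 ^ 2 + X 0 * X 3 ^ 2

open scoped Matrix

/-!
Since `5` divides `2 ^ k - 1` for no `0 < k < 4`, an automorphism of order `5` fixes no nonzero
vector of `𝔽₂⁴`, so the number of nonzero zeros of `f` is a multiple of `5`. By Chevalley–Warning
it is odd, hence `5` or `15`. Five nonzero zeros would span `𝔽₂⁴`, because their span is invariant
under the automorphism of order `5`, and the stabilizer would embed into `S₅`.

So `f` vanishes identically on `𝔽₂⁴`. This rules out monomials in three distinct variables, so
`f = ∑ Aᵢⱼ xᵢ² xⱼ` for a matrix `A`, and a linear substitution `g` turns `A` into `gᵀ A g`. At a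
rational point `v` the value of `f` is `vᵀ A v` and its gradient is `vᵀ A`; hence `A` is alternating
because `f` vanishes, and nondegenerate because `f` is smooth. All such `A` are congruent.
-/

section GroupActions

open MulAction

variable {G V : Type*} {p r : ℕ} [Fact p.Prime]

lemma finite_of_card_eq_prime_pow {n : ℕ} (hV : Nat.card V = p ^ n) : Finite V :=
  Nat.finite_of_card_ne_zero (hV ▸ NeZero.ne (p ^ n))

variable [AddGroup V]

-- `hV` makes `r` a primitive divisor: `r ∣ #V - 1`, but `r ∤ p ^ k - 1` for `1 < p ^ k < #V`.
lemma eq_bot_or_eq_top_of_card_modEq_one (hV : Nat.card V = p ^ orderOf (p : ZMod r))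
    (W : AddSubgroup V) (hW : Nat.card W ≡ 1 [MOD r]) : W = ⊥ ∨ W = ⊤ := by
  have : Finite V := finite_of_card_eq_prime_pow hV
  obtain ⟨k, hk, hWk⟩ :=
    (Nat.dvd_prime_pow Fact.out).1 (W.card_addSubgroup_dvd_card.trans hV.dvd)
  have hpow : (p : ZMod r) ^ k = 1 := by
    simpa [hWk] using (ZMod.natCast_eq_natCast_iff _ _ _).2 hW
  rcases Nat.eq_zero_or_pos k with rfl | hpos
  · exact .inl (W.eq_bot_of_card_eq hWk)
  · have hk' : k = orderOf (p : ZMod r) :=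
      hk.antisymm (Nat.le_of_dvd hpos (orderOf_dvd_of_pow_eq_one hpow))
    exact .inr (W.eq_top_of_card_eq (by rw [hWk, hV, ← hk']))

variable [Group G] [DistribMulAction G V]

lemma smul_mem_addSubgroup_closure {T : Set V} (hT : ∀ (g : G), ∀ v ∈ T, g • v ∈ T) (g : G)
    {v : V} (hv : v ∈ AddSubgroup.closure T) : g • v ∈ AddSubgroup.closure T := by
  have hle : AddSubgroup.closure T ≤
      (AddSubgroup.closure T).comap (DistribSMul.toAddMonoidHom V g) :=
    (AddSubgroup.closure_le _).2 fun w hw ↦ AddSubgroup.subset_closure (hT g w hw)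
  exact hle hv

/-- The nonzero elements of an invariant subset `Z` of `V`, as an invariant subset: the set that the
counting and permutation arguments apply to. -/
def nonzeroVectors (Z : SubMulAction G V) : SubMulAction G V where
  carrier := (Z : Set V) \ {0}
  smul_mem' g _ hv := ⟨Z.smul_mem g hv.1, (smul_eq_zero_iff_eq g).not.2 hv.2⟩

lemma card_nonzeroVectors_add_one [Finite V] (Z : SubMulAction G V) (h0 : 0 ∈ Z) :
    Nat.card (nonzeroVectors Z) + 1 = Nat.card Z :=
  Set.ncard_sdiff_singleton_add_one (s := (Z : Set V)) h0

variable [FaithfulSMul G V] [Fact r.Prime]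

lemma eq_zero_of_mem_fixedPoints_of_isPGroup [Nontrivial G]
    (hV : Nat.card V = p ^ orderOf (p : ZMod r)) (hG : IsPGroup r G) {v : V}
    (hv : v ∈ fixedPoints G V) : v = 0 := by
  have : Finite V := finite_of_card_eq_prime_pow hV
  have hV1 : Nat.card V ≡ 1 [MOD r] :=
    (ZMod.natCast_eq_natCast_iff _ _ _).1 (by simp [hV, pow_orderOf_eq_one])
  let W := FixedPoints.addSubgroup G V
  have hW : Nat.card W ≡ 1 [MOD r] := (hG.card_modEq_card_fixedPoints V).symm.trans hV1
  rcases eq_bot_or_eq_top_of_card_modEq_one hV W hW with hbot | htop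
  · exact AddSubgroup.mem_bot.1 (hbot ▸ (show v ∈ W from hv))
  · obtain ⟨g, hg⟩ := exists_ne (1 : G)
    refine absurd (FaithfulSMul.eq_of_smul_eq_smul fun w : V ↦ ?_) hg
    have hw : w ∈ W := htop ▸ AddSubgroup.mem_top w
    rw [one_smul, hw g]

lemma card_dvd_factorial_of_closure_eq_top (T : SubMulAction G V) [Finite T]
    (hT : AddSubgroup.closure (T : Set V) = ⊤) : Nat.card G ∣ (Nat.card T).factorial := by
  rw [← Nat.card_perm]
  refine Subgroup.card_dvd_of_injective (toPermHom G T) fun g h hgh ↦ ?_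
  have heq : Set.EqOn (DistribSMul.toAddMonoidHom V g) (DistribSMul.toAddMonoidHom V h) T :=
    fun v hv ↦ congrArg Subtype.val (DFunLike.congr_fun hgh (⟨v, hv⟩ : T))
  exact FaithfulSMul.eq_of_smul_eq_smul
    (DFunLike.congr_fun (AddMonoidHom.eq_of_eqOn_dense hT heq))

variable [Finite G]

lemma prime_dvd_card_nonzeroVectors (hV : Nat.card V = p ^ orderOf (p : ZMod r))
    (hG : r ∣ Nat.card G) (Z : SubMulAction G V) : r ∣ Nat.card (nonzeroVectors Z) := by
  obtain ⟨g, hg⟩ := exists_prime_orderOf_dvd_card' r hG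
  have hcard : Nat.card (Subgroup.zpowers g) = r := (Nat.card_zpowers g).trans hg
  have hP : IsPGroup r (Subgroup.zpowers g) := IsPGroup.of_card (n := 1) (by rw [hcard, pow_one])
  have : Nontrivial (Subgroup.zpowers g) := Finite.one_lt_card_iff_nontrivial.1
    (hcard ▸ Nat.Prime.one_lt Fact.out)
  by_contra hr
  obtain ⟨v, hv⟩ := hP.nonempty_fixed_point_of_prime_not_dvd_card (nonzeroVectors Z) hr
  have hfix : (v : V) ∈ fixedPoints (Subgroup.zpowers g) V := fun γ ↦ congrArg Subtype.val (hv γ)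
  exact v.2.2 (eq_zero_of_mem_fixedPoints_of_isPGroup hV hP hfix)

lemma addSubgroup_eq_top_of_smul_mem (hV : Nat.card V = p ^ orderOf (p : ZMod r))
    (hG : r ∣ Nat.card G) (W : AddSubgroup V) (hW : ∀ (g : G), ∀ v ∈ W, g • v ∈ W)
    (hbot : W ≠ ⊥) : W = ⊤ := by
  have : Finite V := finite_of_card_eq_prime_pow hV
  let Z : SubMulAction G V := ⟨W, fun g v hv ↦ hW g v hv⟩
  have hr : r ∣ Nat.card (nonzeroVectors Z) := prime_dvd_card_nonzeroVectors hV hG Z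
  have hcard : Nat.card (nonzeroVectors Z) + 1 = Nat.card W :=
    card_nonzeroVectors_add_one Z W.zero_mem
  have hmod : Nat.card W ≡ 1 [MOD r] := by
    rw [← hcard]
    exact (Nat.modEq_zero_iff_dvd.2 hr).add_right 1
  exact (eq_bot_or_eq_top_of_card_modEq_one hV W hmod).resolve_left hbot

lemma card_dvd_factorial_card_nonzeroVectors (hV : Nat.card V = p ^ orderOf (p : ZMod r))
    (hG : r ∣ Nat.card G) (Z : SubMulAction G V) (hZ : Nat.card (nonzeroVectors Z) ≠ 0) :
    Nat.card G ∣ (Nat.card (nonzeroVectors Z)).factorial := by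
  have : Finite V := finite_of_card_eq_prime_pow hV
  obtain ⟨v, hv⟩ := (Nat.card_ne_zero.1 hZ).1
  refine card_dvd_factorial_of_closure_eq_top _ (addSubgroup_eq_top_of_smul_mem hV hG _
    (fun g w ↦ smul_mem_addSubgroup_closure (fun g w ↦ (nonzeroVectors Z).smul_mem g) g) ?_)
  intro hbot
  exact hv.2 (AddSubgroup.mem_bot.1 (hbot ▸ AddSubgroup.subset_closure hv))

lemma two_pow_orderOf_two_zmod_five : 2 ^ orderOf ((2 : ℕ) : ZMod 5) = 16 := by
  rw [orderOf_eq_prime_pow (p := 2) (n := 1) (by decide) (by decide)]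
  rfl

lemma eq_top_of_even_card (hV : Nat.card V = 16) (hG : 5 ∣ Nat.card G)
    (hG' : ¬ Nat.card G ∣ Nat.factorial 5) (Z : SubMulAction G V) (h0 : 0 ∈ Z)
    (heven : Even (Nat.card Z)) : Z = ⊤ := by
  have : Fact (Nat.Prime 5) := ⟨Nat.prime_five⟩
  have : Finite V := Nat.finite_of_card_ne_zero (by lia)
  have hV' : Nat.card V = 2 ^ orderOf ((2 : ℕ) : ZMod 5) :=
    hV.trans two_pow_orderOf_two_zmod_five.symm
  obtain ⟨m, hm⟩ : 5 ∣ Nat.card (nonzeroVectors Z) := prime_dvd_card_nonzeroVectors hV' hG Z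
  have hadd := card_nonzeroVectors_add_one Z h0
  have hle : Nat.card Z ≤ 16 := hV ▸ Finite.card_subtype_le _
  have hne : Nat.card (nonzeroVectors Z) ≠ 5 := fun h5 ↦
    hG' (h5 ▸ card_dvd_factorial_card_nonzeroVectors hV' hG Z (by lia))
  have hcard : Nat.card Z = 16 := by
    obtain ⟨k, hk⟩ := heven
    lia
  have huniv : (Z : Set V) = Set.univ :=
    Set.eq_of_subset_of_ncard_le (Set.subset_univ _) (by rw [Set.ncard_univ, hV]; exact hcard.ge)
  exact SetLike.coe_injective huniv

end GroupActions

section QbicForms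

variable {σ K : Type*} [Field K] [Fintype K]

lemma coeff_eq_zero_of_forall_eval_eq_zero [Finite σ] {d : ℕ} {f : MvPolynomial σ K}
    (hf : f.IsHomogeneous d) (hv : ∀ v, eval v f = 0) {m : σ →₀ ℕ}
    (hm : ∀ i, m i < Fintype.card K) : coeff m f = 0 := by
  by_contra hne
  have hdeg : f.totalDegree = m.degree := by
    have hmd : m.degree = d := by rw [Finsupp.degree_eq_weight_one]; exact hf hne
    rw [hmd]
    exact hf.totalDegree (ne_zero_iff.2 ⟨m, hne⟩)
  obtain ⟨v, -, hv'⟩ := combinatorial_nullstellensatz_exists_eval_nonzero f m hne hdeg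
    (fun _ ↦ Finset.univ) hm
  exact hv' (hv v)

lemma exists_eq_single_add_single_one {m : σ →₀ ℕ} {q : ℕ} (hm : m.degree = q + 1) {i : σ}
    (hi : q ≤ m i) : ∃ j, m = Finsupp.single i q + Finsupp.single j 1 := by
  obtain ⟨n, rfl⟩ := exists_add_of_le (Finsupp.single_le_iff.2 hi)
  have hn : n.degree = 1 := by simpa using hm
  obtain ⟨j, rfl⟩ : n ∈ Set.range fun j : σ ↦ Finsupp.single j 1 := by
    rw [Finsupp.range_single_one]; exact hn
  exact ⟨j, rfl⟩

lemma single_add_single_one_inj {q : ℕ} (hq : 1 < q) {a b i j : σ} :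
    Finsupp.single a q + Finsupp.single b 1 = Finsupp.single i q + Finsupp.single j 1 ↔
      a = i ∧ b = j := by
  classical
  refine ⟨fun h ↦ ?_, fun ⟨ha, hb⟩ ↦ ha ▸ hb ▸ rfl⟩
  have hai : a = i := by
    by_contra hne
    have := DFunLike.congr_fun h a
    simp only [Finsupp.add_apply, Finsupp.single_apply, Ne.symm hne, if_true, if_false] at this
    split_ifs at this <;> lia
  subst hai
  exact ⟨rfl, Finsupp.single_left_injective one_ne_zero (add_left_cancel h)⟩

variable [Fintype σ]

/-- The `q`-bic form `∑ i j, A i j * X i ^ q * X j` over a field with `q` elements: the analogue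
of a Hermitian form in which the Frobenius plays the role of conjugation. For `q = 2` these are
the cubic forms without monomials in three distinct variables. -/
def qbicForm (A : Matrix σ σ K) : MvPolynomial σ K :=
  (fun i ↦ X i ^ Fintype.card K) ⬝ᵥ A.map C *ᵥ X

lemma qbicForm_eq_sum (A : Matrix σ σ K) :
    qbicForm A = ∑ i, ∑ j, monomial
      (Finsupp.single i (Fintype.card K) + Finsupp.single j 1) (A i j) := by
  simp only [qbicForm, dotProduct, Matrix.mulVec, Matrix.map_apply, Finset.mul_sum]
  refine Finset.sum_congr rfl fun i _ ↦ Finset.sum_congr rfl fun j _ ↦ ?_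
  rw [mul_left_comm, X_pow_eq_monomial, X, monomial_mul, C_mul_monomial]
  simp

lemma eq_qbicForm_of_forall_eval_eq_zero {f : MvPolynomial σ K}
    (hf : f.IsHomogeneous (Fintype.card K + 1)) (hv : ∀ v, eval v f = 0) :
    f = qbicForm (Matrix.of fun i j ↦
      coeff (Finsupp.single i (Fintype.card K) + Finsupp.single j 1) f) := by
  classical
  ext m
  simp only [qbicForm_eq_sum, coeff_sum, coeff_monomial, Matrix.of_apply]
  by_cases h : ∃ i j, Finsupp.single i (Fintype.card K) + Finsupp.single j 1 = m
  · obtain ⟨i, j, rfl⟩ := h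
    simp [single_add_single_one_inj Fintype.one_lt_card, ite_and]
  · push Not at h
    simp only [h, if_false, Finset.sum_const_zero]
    by_contra hne
    refine hne (coeff_eq_zero_of_forall_eval_eq_zero hf hv fun i ↦ ?_)
    by_contra! hi
    obtain ⟨j, hj⟩ := exists_eq_single_add_single_one
      (by rw [Finsupp.degree_eq_weight_one]; exact hf hne) hi
    exact h i j hj.symm

lemma eval_qbicForm (A : Matrix σ σ K) (v : σ → K) : eval v (qbicForm A) = v ⬝ᵥ A *ᵥ v := by
  simp [qbicForm, dotProduct, Matrix.mulVec, FiniteField.pow_card]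

lemma eval_pderiv_qbicForm (A : Matrix σ σ K) (v : σ → K) (j : σ) :
    eval v (pderiv j (qbicForm A)) = (v ᵥ* A) j := by
  classical
  have hq : (Fintype.card K : MvPolynomial σ K) = 0 := by
    rw [← map_natCast C, FiniteField.cast_card_eq_zero, map_zero]
  simp [qbicForm, dotProduct, Matrix.mulVec, Matrix.vecMul, Derivation.leibniz,
    Derivation.leibniz_pow, FiniteField.pow_card, pderiv_X, Pi.single_apply, hq]

lemma aeval_qbicForm (A g : Matrix σ σ K) :
    aeval (fun i ↦ ∑ j, g i j • X j) (qbicForm A) = qbicForm (gᵀ * A * g) := by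
  set φ : MvPolynomial σ K →ₐ[K] MvPolynomial σ K := aeval fun i ↦ ∑ j, g i j • X j
  let Xq : σ → MvPolynomial σ K := fun i ↦ X i ^ Fintype.card K
  have hX : φ ∘ X = g.map C *ᵥ X := by
    ext1 i
    simp [φ, Matrix.mulVec, dotProduct, smul_eq_C_mul]
  have hXq : φ ∘ Xq = g.map C *ᵥ Xq := by
    ext1 i
    calc
      φ (X i ^ Fintype.card K)
        = FiniteField.frobeniusAlgHom K (MvPolynomial σ K) (∑ j, g i j • X j) := by
        rw [map_pow, aeval_X]
        rfl
      _ = ∑ j, g i j • X j ^ Fintype.card K := by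
        simp only [map_sum, map_smul, FiniteField.coe_frobeniusAlgHom]
      _ = (g.map C *ᵥ Xq) i := by simp [Xq, Matrix.mulVec, dotProduct, smul_eq_C_mul]
  have hφA : φ ∘ (A.map C *ᵥ X) = A.map C *ᵥ φ ∘ X := by
    ext1 i
    simp [φ, Matrix.mulVec, dotProduct]
  calc φ (Xq ⬝ᵥ A.map C *ᵥ X)
      = φ ∘ Xq ⬝ᵥ φ ∘ (A.map C *ᵥ X) := RingHom.map_dotProduct φ.toRingHom _ _
    _ = (g.map C *ᵥ Xq) ⬝ᵥ A.map C *ᵥ g.map C *ᵥ X := by rw [hφA, hX, hXq]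
    _ = Xq ⬝ᵥ (g.map C)ᵀ *ᵥ A.map C *ᵥ g.map C *ᵥ X := by
      rw [Matrix.dotProduct_mulVec Xq, Matrix.vecMul_transpose]
    _ = Xq ⬝ᵥ (gᵀ * A * g).map C *ᵥ X := by
      simp only [Matrix.map_mul, Matrix.mulVec_mulVec, Matrix.transpose_map, mul_assoc]

end QbicForms

section AlternatingForms

variable {K : Type*} [Field K]

lemma exists_orthogonal_hyperbolic_pairs {V : Type*} [AddCommGroup V] [Module K V]
    (hV : 2 < Module.finrank K V) {B : LinearMap.BilinForm K V} (hB : B.IsAlt)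
    (hsep : B.SeparatingLeft) :
    ∃ u u' w' w, B u w = 1 ∧ B u' w' = 1 ∧
      B u u' = 0 ∧ B u w' = 0 ∧ B w u' = 0 ∧ B w w' = 0 := by
  have : FiniteDimensional K V := Module.finite_of_finrank_pos (by lia)
  have hpair : ∀ u : V, u ≠ 0 → ∃ w, B u w = 1 := fun u hu ↦ by
    obtain ⟨w, hw⟩ : ∃ w, B u w ≠ 0 := by
      by_contra! h
      exact hu (hsep u h)
    exact ⟨(B u w)⁻¹ • w, by simp [hw]⟩
  have : Nontrivial V := Module.nontrivial_of_finrank_pos (R := K) (by lia)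
  obtain ⟨u, hu⟩ := exists_ne (0 : V)
  obtain ⟨w, hw⟩ := hpair u hu
  obtain ⟨u', hu', hu'0⟩ : ∃ u' ∈ LinearMap.ker ((B u).prod (B w)), u' ≠ 0 :=
    Submodule.exists_mem_ne_zero_of_ne_bot (LinearMap.ker_ne_bot_of_finrank_lt (by simpa using hV))
  obtain ⟨huu', hwu'⟩ : B u u' = 0 ∧ B w u' = 0 := by simpa using hu'
  obtain ⟨y, hy⟩ := hpair u' hu'0
  have hwu : B w u = -1 := by rw [← hB.neg_eq, hw]
  have hu'u : B u' u = 0 := by rw [← hB.neg_eq, huu', neg_zero]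
  have hu'w : B u' w = 0 := by rw [← hB.neg_eq, hwu', neg_zero]
  -- `w'` is the projection of `y` to the orthogonal complement of the hyperbolic plane `⟨u, w⟩`.
  refine ⟨u, u', y - B u y • w + B w y • u, w, hw, ?_, huu', ?_, hwu', ?_⟩
  · simp [hy, hu'u, hu'w]
  · simp [hw, hB.self_eq_zero]
  · simp [hwu, hB.self_eq_zero]

/-- The Gram matrix of a symplectic basis `u, u', w', w` of a four-dimensional space, in which
`u, w` and `u', w'` are the hyperbolic pairs. -/
def symplecticGram (R : Type*) [Ring R] : Matrix (Fin 4) (Fin 4) R :=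
  !![0, 0, 0, 1; 0, 0, 1, 0; 0, -1, 0, 0; -1, 0, 0, 0]

lemma neg_symplecticGram_mul_self (R : Type*) [Ring R] :
    -symplecticGram R * symplecticGram R = 1 := by
  ext i j
  fin_cases i <;> fin_cases j <;> simp [symplecticGram, Matrix.mul_apply, Fin.sum_univ_four]

lemma exists_gram_eq_symplecticGram {V : Type*} [AddCommGroup V] [Module K V]
    (hV : 2 < Module.finrank K V) {B : LinearMap.BilinForm K V} (hB : B.IsAlt)
    (hsep : B.SeparatingLeft) :
    ∃ e : Fin 4 → V, ∀ i j, B (e i) (e j) = symplecticGram K i j := by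
  obtain ⟨u, u', w', w, huw, hu'w', huu', huw', hwu', hww'⟩ :=
    exists_orthogonal_hyperbolic_pairs hV hB hsep
  have hwu : B w u = -1 := by rw [← hB.neg_eq, huw]
  have hw'u' : B w' u' = -1 := by rw [← hB.neg_eq, hu'w']
  have hu'u : B u' u = 0 := by rw [← hB.neg_eq, huu', neg_zero]
  have hw'u : B w' u = 0 := by rw [← hB.neg_eq, huw', neg_zero]
  have hu'w : B u' w = 0 := by rw [← hB.neg_eq, hwu', neg_zero]
  have hw'w : B w' w = 0 := by rw [← hB.neg_eq, hww', neg_zero]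
  refine ⟨![u, u', w', w], fun i j ↦ ?_⟩
  fin_cases i <;> fin_cases j <;> simp [symplecticGram, hB.self_eq_zero, *]

lemma exists_transpose_mul_mul_eq_symplecticGram (A : Matrix (Fin 4) (Fin 4) K)
    (halt : ∀ v, v ⬝ᵥ A *ᵥ v = 0) (hker : ∀ v, v ᵥ* A = 0 → v = 0) :
    ∃ g : GL (Fin 4) K, (g : Matrix (Fin 4) (Fin 4) K)ᵀ * A * g = symplecticGram K := by
  have hB : (Matrix.toBilin' A).IsAlt := fun v ↦ by rw [Matrix.toBilin'_apply', halt]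
  have hsep : (Matrix.toBilin' A).SeparatingLeft := fun v hv ↦
    hker v (dotProduct_eq_zero _ fun w ↦ by
      rw [← Matrix.dotProduct_mulVec, ← Matrix.toBilin'_apply', hv])
  obtain ⟨e, he⟩ := exists_gram_eq_symplecticGram (by simp) hB hsep
  let b : Matrix (Fin 4) (Fin 4) K := Matrix.of e
  have hgram : b * A * bᵀ = symplecticGram K := by
    ext i j
    rw [← he, Matrix.toBilin'_apply', Matrix.dotProduct_mulVec]
    rfl
  have hinv : (-symplecticGram K * b * A) * bᵀ = 1 := by
    rw [← neg_symplecticGram_mul_self K, ← hgram]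
    simp only [mul_assoc]
  have hunit : IsUnit bᵀ := IsUnit.of_mul_eq_one_right _ hinv
  exact ⟨hunit.unit, hgram⟩

end AlternatingForms

section CubicsOverF2

instance faithfulSMul_matrix {n R : Type*} [Fintype n] [DecidableEq n] [Semiring R] :
    FaithfulSMul (Matrix n n R) (n → R) :=
  ⟨Matrix.ext_iff_smul.2⟩

lemma eval_act (g : Matrix (Fin 4) (Fin 4) F2) (f : MvPolynomial (Fin 4) F2) (v : Fin 4 → F2) :
    eval v (act g f) = eval (g *ᵥ v) f := by
  have hcomp : (aeval v : MvPolynomial (Fin 4) F2 →ₐ[F2] F2).comp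
      (aeval fun i ↦ ∑ j, g i j • (X j : MvPolynomial (Fin 4) F2)) = aeval (g *ᵥ v) := by
    ext i
    simp [Matrix.mulVec, dotProduct]
  simpa only [AlgHom.comp_apply, coe_aeval_eq_eval] using! DFunLike.congr_fun hcomp f

lemma c0_eq_qbicForm : c0 = qbicForm (symplecticGram F2) := by
  simp only [c0, qbicForm, symplecticGram, dotProduct, Matrix.mulVec, ZMod.card, Fin.sum_univ_four,
    ZMod.neg_eq_self_mod_two, Matrix.map_apply, Matrix.of_apply, Matrix.cons_val, C_0, C_1,
    zero_mul, one_mul, add_zero, zero_add]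
  ring

/-- The zero set of `f` in `𝔽₂⁴`, bundled with its invariance under the stabilizer of `f`. -/
def zeroSet (f : MvPolynomial (Fin 4) F2) : SubMulAction (stab f) (Fin 4 → F2) where
  carrier := {v | eval v f = 0}
  smul_mem' g v hv := by
    have hg : act (g : GL (Fin 4) F2) f = f := g.2
    rw [Set.mem_ofPred_eq, ← hg, eval_act] at hv
    exact hv

lemma even_card_zeroSet {f : MvPolynomial (Fin 4) F2} (hf : f.totalDegree < 4) :
    Even (Nat.card (zeroSet f)) := by
  have hcard : Nat.card (zeroSet f) = Fintype.card {v : Fin 4 → F2 // eval v f = 0} :=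
    Nat.card_eq_fintype_card (α := {v : Fin 4 → F2 // eval v f = 0})
  rw [even_iff_two_dvd, hcard]
  exact char_dvd_card_solutions 2 (by simpa using hf)

lemma eval_eq_zero_of_card_stab {f : MvPolynomial (Fin 4) F2} (hf : f.totalDegree < 4)
    (hf0 : eval 0 f = 0) (h5 : 5 ∣ Nat.card (stab f))
    (h120 : ¬ Nat.card (stab f) ∣ Nat.factorial 5) (v : Fin 4 → F2) : eval v f = 0 :=
  (eq_top_of_even_card (by simp) h5 h120 (zeroSet f) hf0 (even_card_zeroSet hf)).ge
    (Set.mem_univ v)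

lemma exists_act_eq_c0 {f : MvPolynomial (Fin 4) F2} (hf : f.IsHomogeneous 3)
    (hv : ∀ v, eval v f = 0) (hns : ∀ v, (∀ i, eval v (pderiv i f) = 0) → v = 0) :
    ∃ g : GL (Fin 4) F2, act (g : Matrix (Fin 4) (Fin 4) F2) f = c0 := by
  obtain ⟨A, rfl⟩ : ∃ A, f = qbicForm A := ⟨_, eq_qbicForm_of_forall_eval_eq_zero hf hv⟩
  have halt : ∀ v, v ⬝ᵥ A *ᵥ v = 0 := fun v ↦ (eval_qbicForm A v).symm.trans (hv v)
  have hker : ∀ v, v ᵥ* A = 0 → v = 0 := fun v hvA ↦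
    hns v fun i ↦ (eval_pderiv_qbicForm A v i).trans (congrFun hvA i)
  obtain ⟨g, hg⟩ := exists_transpose_mul_mul_eq_symplecticGram A halt hker
  exact ⟨g, by rw [c0_eq_qbicForm, ← hg]; exact aeval_qbicForm A g⟩

lemma eq_zero_of_isSmoothCubic {f : MvPolynomial (Fin 4) F2} (hf : IsSmoothCubic f)
    {v : Fin 4 → F2} (hv : eval v f = 0) (hdv : ∀ i, eval v (pderiv i f) = 0) : v = 0 := by
  have hmap (p : MvPolynomial (Fin 4) F2) (hp : eval v p = 0) :
      eval (algebraMap F2 Kbar ∘ v) (map (algebraMap F2 Kbar) p) = 0 := by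
    rw [← map_eval, hp, map_zero]
  have hv0 : algebraMap F2 Kbar ∘ v = 0 := hf.2 _ (hmap f hv) fun i ↦ hmap _ (hdv i)
  exact funext fun i ↦ (map_eq_zero (algebraMap F2 Kbar)).1 (congrFun hv0 i)

lemma factorial_dvd_card_stab {f : MvPolynomial (Fin 4) F2} {H : Subgroup (GL (Fin 4) F2)}
    (hH : H ≤ stab f) {n : ℕ} (e : H ≃* Equiv.Perm (Fin n)) :
    n.factorial ∣ Nat.card (stab f) := by
  have hcard : Nat.card H = n.factorial := by
    rw [Nat.card_congr e.toEquiv, Nat.card_perm, Nat.card_fin]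
  exact hcard ▸ Subgroup.card_dvd_of_le hH

theorem S6_action_implies_vanishing_general (f : MvPolynomial (Fin 4) F2) (hf : f.IsHomogeneous 3)
    (hns : ∀ v : Fin 4 → F2, eval v f = 0 → (∀ i, eval v (pderiv i f) = 0) → v = 0)
    (h5 : 5 ∣ Nat.card (stab f)) (h120 : ¬ Nat.card (stab f) ∣ Nat.factorial 5) :
    (∀ v : Fin 4 → F2, eval v f = 0) ∧
    ∃ g : GL (Fin 4) F2, act (g : Matrix (Fin 4) (Fin 4) F2) f = c0 := by
  have hdeg : f.totalDegree < 4 := hf.totalDegree_le.trans_lt (by norm_num)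
  have hf0 : eval 0 f = 0 := by
    rw [eval_zero, constantCoeff_eq]
    exact hf.coeff_eq_zero (by simp)
  have hv : ∀ v : Fin 4 → F2, eval v f = 0 := eval_eq_zero_of_card_stab hdeg hf0 h5 h120
  exact ⟨hv, exists_act_eq_c0 hf hv fun v ↦ hns v (hv v)⟩

end CubicsOverF2

/-- if the stabilizer of a smooth cubic form `f` over `𝔽₂` contains a subgroup
isomorphic to `S₆`, then `f` vanishes at every point of `𝔽₂⁴` and is `GL₄(𝔽₂)`-equivalent
to `c₀`. -/
theorem S6_action_implies_vanishing (f : MvPolynomial (Fin 4) F2)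
    (hf : IsSmoothCubic f)
    (hS6 : ∃ H : Subgroup (GL (Fin 4) F2), H ≤ stab f ∧
      Nonempty (H ≃* Equiv.Perm (Fin 6))) :
    (∀ v : Fin 4 → F2, eval v f = 0) ∧
    ∃ g : GL (Fin 4) F2, act (g : Matrix (Fin 4) (Fin 4) F2) f = c0 := by
  obtain ⟨H, hH, ⟨e⟩⟩ := hS6
  have h720 : Nat.factorial 6 ∣ Nat.card (stab f) := factorial_dvd_card_stab hH e
  exact S6_action_implies_vanishing_general f hf.1 (fun v ↦ eq_zero_of_isSmoothCubic hf)
    (dvd_trans (by decide) h720) (fun h ↦ absurd (h720.trans h) (by decide))
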